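/- arXiv:2307.06835 — 2 statements merged into one kernel-verified Lean document; each statement's English description precedes it below -/
import Mathlib

section
/- Let N be an even positive integer. Define the real discrete Fourier transform F^r : ℝ^N → ℝ^N by (F^r x)[n] = Σ_{k=0}^{N−1} x[k]·cos(2πnk/N) for 0 ≤ n ≤ N/2 and (F^r x)[n] = Σ_{k=0}^{N−1} x[k]·sin(2πnk/N) for N/2 < n ≤ N−1, and for z ∈ ℝ^N define b_z ∈ ℝ^{N/2+1} by b_z[0] = z[0]², b_z[N/2] = z[N/2]², and b_z[k] = z[k]² + z[N−k]² for 1 ≤ k ≤ N/2 − 1. Then for all x, y ∈ ℝ^N, a_x = a_y if and only if b_{F^r x} = b_{F^r y}. -/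
/-!
STATEMENT 13: For N even, a_x = a_y iff b_{F^r x} = b_{F^r y}, where F^r is the real
discrete Fourier transform and b_z = (z[0]², z[1]²+z[N−1]², …, z[N/2]²) ∈ ℝ^{N/2+1}.
-/

noncomputable section

/-- The periodic auto-correlation of x ∈ ℝ^N (indices mod N). -/
def autocorr {N : ℕ} [NeZero N] (x : ZMod N → ℝ) : ZMod N → ℝ :=
  fun ℓ => ∑ n : ZMod N, x n * x (n + ℓ)

/-- The real discrete Fourier transform on ℝ^N (N = 2·Nh):
(F^r x)[n] = Σ_k x[k]·cos(2πnk/N) for 0 ≤ n ≤ N/2, and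
(F^r x)[n] = Σ_k x[k]·sin(2πnk/N) for N/2 < n ≤ N−1. -/
def realDFT {N : ℕ} [NeZero N] (Nh : ℕ) (x : ZMod N → ℝ) : ZMod N → ℝ :=
  fun n =>
    if n.val ≤ Nh then
      ∑ k : ZMod N, x k * Real.cos (2 * Real.pi * n.val * k.val / N)
    else
      ∑ k : ZMod N, x k * Real.sin (2 * Real.pi * n.val * k.val / N)

/-- b_z ∈ ℝ^{N/2+1}: b_z[0] = z[0]², b_z[N/2] = z[N/2]², and
b_z[k] = z[k]² + z[N−k]² for 1 ≤ k ≤ N/2−1. -/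
def bMap {N : ℕ} [NeZero N] (Nh : ℕ) (z : ZMod N → ℝ) : Fin (Nh + 1) → ℝ :=
  fun j =>
    if (j : ℕ) = 0 then z 0 ^ 2
    else if (j : ℕ) = Nh then z (Nh : ZMod N) ^ 2
    else z ((j : ℕ) : ZMod N) ^ 2 + z (-((j : ℕ) : ZMod N)) ^ 2

/-!
By the Wiener–Khinchin identity, the Fourier transform of `autocorr x` is the power spectrum
`|𝓕 x|²`, so injectivity of `𝓕` makes equality of autocorrelations the same as equality of power
spectra. For real `x`, `𝓕 x (-k)` is the conjugate of `𝓕 x k`: the power spectrum is even, hence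
determined by the frequencies `0, …, N/2`, where it is `bMap` of the real DFT because `realDFT`
lists real parts at the low frequencies and, up to sign, imaginary parts at the opposite ones. The
frequencies `0` and `N/2` are their own opposites, so there the imaginary part vanishes.
-/

section PowerSpectrum

open scoped ZMod ComplexConjugate

variable {N : ℕ} [NeZero N]

lemma dft_conj (f : ZMod N → ℂ) (k : ZMod N) :
    𝓕 (fun j ↦ conj (f j)) k = conj (𝓕 f (-k)) := by
  simp only [ZMod.dft_apply, smul_eq_mul, map_sum, map_mul, ← AddChar.map_neg_eq_conj, mul_neg,
    neg_neg]

lemma dft_crossCorrelation (f g : ZMod N → ℂ) (k : ZMod N) :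
    𝓕 (fun ℓ ↦ ∑ n, conj (f n) * g (n + ℓ)) k = conj (𝓕 f k) * 𝓕 g k := by
  have phase_split (n ℓ : ZMod N) :
      ZMod.stdAddChar (-(ℓ * k)) =
        conj (ZMod.stdAddChar (-(n * k))) * ZMod.stdAddChar (-((n + ℓ) * k)) := by
    rw [← AddChar.map_neg_eq_conj, ← AddChar.map_add_eq_mul]
    congr 1
    ring
  let F (n m : ZMod N) : ℂ :=
    conj (ZMod.stdAddChar (-(n * k)) * f n) * (ZMod.stdAddChar (-(m * k)) * g m)
  calc 𝓕 (fun ℓ ↦ ∑ n, conj (f n) * g (n + ℓ)) k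
      = ∑ ℓ, ∑ n, F n (n + ℓ) := by
        simp only [ZMod.dft_apply, smul_eq_mul, Finset.mul_sum]
        refine Finset.sum_congr rfl fun ℓ _ ↦ Finset.sum_congr rfl fun n _ ↦ ?_
        simp only [F, phase_split n ℓ, map_mul]
        ring
    _ = ∑ n, ∑ ℓ, F n (n + ℓ) := Finset.sum_comm
    _ = ∑ n, ∑ m, F n m :=
        Finset.sum_congr rfl fun n _ ↦ Equiv.sum_comp (Equiv.addLeft n) (F n)
    _ = conj (𝓕 f k) * 𝓕 g k := by
        simp only [F, ZMod.dft_apply, smul_eq_mul, map_sum, Finset.sum_mul_sum]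

/-- The power spectrum `|𝓕 x|²` of a real signal, through which autocorrelations are compared with
`bMap`. The transform is Mathlib's `ZMod.dft`, with kernel `exp (-2πijk/N)`. -/
def powerSpectrum (x : ZMod N → ℝ) : ZMod N → ℝ :=
  fun k ↦ Complex.normSq (𝓕 (Complex.ofReal ∘ x) k)

lemma dft_ofReal_comp_autocorr (x : ZMod N → ℝ) :
    𝓕 (Complex.ofReal ∘ autocorr x) = Complex.ofReal ∘ powerSpectrum x := by
  funext k
  have h := dft_crossCorrelation (Complex.ofReal ∘ x) (Complex.ofReal ∘ x) k
  rw [← Complex.normSq_eq_conj_mul_self] at h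
  simpa only [Function.comp_def, autocorr, powerSpectrum, Complex.ofReal_sum, Complex.ofReal_mul,
    Complex.conj_ofReal] using h

lemma autocorr_eq_iff_powerSpectrum_eq (x y : ZMod N → ℝ) :
    autocorr x = autocorr y ↔ powerSpectrum x = powerSpectrum y := by
  have ofReal_comp_inj {u v : ZMod N → ℝ} : Complex.ofReal ∘ u = Complex.ofReal ∘ v ↔ u = v :=
    Complex.ofReal_injective.comp_left.eq_iff
  rw [← ofReal_comp_inj, ← ZMod.dft.injective.eq_iff, dft_ofReal_comp_autocorr,
    dft_ofReal_comp_autocorr, ofReal_comp_inj]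

lemma dft_ofReal_comp_neg (x : ZMod N → ℝ) (k : ZMod N) :
    𝓕 (Complex.ofReal ∘ x) (-k) = conj (𝓕 (Complex.ofReal ∘ x) k) := by
  simpa only [Function.comp_def, Complex.conj_ofReal, neg_neg] using
    dft_conj (Complex.ofReal ∘ x) (-k)

lemma powerSpectrum_even (x : ZMod N → ℝ) : (powerSpectrum x).Even := fun k ↦ by
  simp only [powerSpectrum, dft_ofReal_comp_neg, Complex.normSq_conj]

lemma powerSpectrum_eq_re_sq_add_im_sq (x : ZMod N → ℝ) (k : ZMod N) :
    powerSpectrum x k =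
      (𝓕 (Complex.ofReal ∘ x) k).re ^ 2 + (𝓕 (Complex.ofReal ∘ x) k).im ^ 2 := by
  rw [powerSpectrum, Complex.normSq_apply, ← sq, ← sq]

lemma powerSpectrum_eq_re_sq_of_neg_eq (x : ZMod N → ℝ) {k : ZMod N} (hk : -k = k) :
    powerSpectrum x k = (𝓕 (Complex.ofReal ∘ x) k).re ^ 2 := by
  have him : (𝓕 (Complex.ofReal ∘ x) k).im = 0 :=
    Complex.conj_eq_iff_im.1 (by rw [← dft_ofReal_comp_neg, hk])
  rw [powerSpectrum_eq_re_sq_add_im_sq, him, zero_pow two_ne_zero, add_zero]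

end PowerSpectrum

section RealDFT

open scoped ZMod

variable {N : ℕ} [NeZero N]

lemma stdAddChar_neg_mul_eq_exp (j k : ZMod N) :
    ZMod.stdAddChar (-(j * k)) =
      Complex.exp ((-(2 * Real.pi * k.val * j.val / N) : ℝ) * Complex.I) := by
  have h : -(j * k) = ((-(j.val * k.val : ℕ) : ℤ) : ZMod N) := by
    simp only [Int.cast_neg, Int.cast_mul, Int.cast_natCast, Nat.cast_mul, ZMod.natCast_zmod_val]
  rw [h, ZMod.stdAddChar_coe]
  congr 1
  push_cast
  ring

lemma dft_ofReal_comp_re (x : ZMod N → ℝ) (n : ZMod N) :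
    (𝓕 (Complex.ofReal ∘ x) n).re =
      ∑ k : ZMod N, x k * Real.cos (2 * Real.pi * n.val * k.val / N) := by
  simp only [ZMod.dft_apply, smul_eq_mul, Function.comp_apply, Complex.re_sum,
    Complex.re_mul_ofReal, stdAddChar_neg_mul_eq_exp, Complex.exp_ofReal_mul_I_re, Real.cos_neg,
    mul_comm (Real.cos _)]

lemma dft_ofReal_comp_im (x : ZMod N → ℝ) (n : ZMod N) :
    (𝓕 (Complex.ofReal ∘ x) n).im =
      -∑ k : ZMod N, x k * Real.sin (2 * Real.pi * n.val * k.val / N) := by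
  simp only [ZMod.dft_apply, smul_eq_mul, Function.comp_apply, Complex.im_sum,
    Complex.im_mul_ofReal, stdAddChar_neg_mul_eq_exp, Complex.exp_ofReal_mul_I_im, Real.sin_neg,
    neg_mul, Finset.sum_neg_distrib, mul_comm (Real.sin _)]

lemma realDFT_of_val_le {Nh : ℕ} (x : ZMod N → ℝ) {n : ZMod N} (hn : n.val ≤ Nh) :
    realDFT Nh x n = (𝓕 (Complex.ofReal ∘ x) n).re := by
  rw [realDFT, if_pos hn, dft_ofReal_comp_re]

lemma realDFT_of_lt_val {Nh : ℕ} (x : ZMod N → ℝ) {n : ZMod N} (hn : Nh < n.val) :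
    realDFT Nh x n = -(𝓕 (Complex.ofReal ∘ x) n).im := by
  rw [realDFT, if_neg hn.not_ge, dft_ofReal_comp_im, neg_neg]

lemma bMap_realDFT {Nh : ℕ} (hN : N = 2 * Nh) (x : ZMod N → ℝ) (j : Fin (Nh + 1)) :
    bMap Nh (realDFT Nh x) j = powerSpectrum x (j : ℕ) := by
  have hNpos := NeZero.pos N
  have hj := j.is_le
  have hval : ((j : ℕ) : ZMod N).val = j := ZMod.val_natCast_of_lt (by lia)
  have hre := realDFT_of_val_le x (hval.trans_le hj)
  rw [bMap]
  split_ifs with hzero hhalf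
  · rw [hzero, Nat.cast_zero] at hre ⊢
    rw [powerSpectrum_eq_re_sq_of_neg_eq x neg_zero, hre]
  · have hself : -((j : ℕ) : ZMod N) = (j : ℕ) :=
      (ZMod.neg_eq_self_iff _).2 (.inr (by rw [hval, hhalf, hN]))
    rw [powerSpectrum_eq_re_sq_of_neg_eq x hself, ← hre, hhalf]
  · have hneg : Nh < (-((j : ℕ) : ZMod N)).val := by
      rw [ZMod.neg_val', hval, Nat.mod_eq_of_lt (by lia)]
      lia
    have him : realDFT Nh x (-(j : ℕ)) = (𝓕 (Complex.ofReal ∘ x) (j : ℕ)).im := by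
      rw [realDFT_of_lt_val x hneg, dft_ofReal_comp_neg, Complex.conj_im, neg_neg]
    rw [hre, him, powerSpectrum_eq_re_sq_add_im_sq]

end RealDFT

lemma eq_iff_forall_fin_of_even {N M : ℕ} [NeZero N] {α : Type*} {f g : ZMod N → α}
    (hf : f.Even) (hg : g.Even) (hM : N ≤ 2 * M + 1) :
    f = g ↔ ∀ j : Fin (M + 1), f (j : ℕ) = g (j : ℕ) := by
  refine ⟨fun h j ↦ congrFun h _, fun h ↦ funext fun k ↦ ?_⟩
  have eq_of_val_le {k : ZMod N} (hk : k.val ≤ M) : f k = g k := by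
    simpa only [ZMod.natCast_zmod_val] using h ⟨k.val, Nat.lt_succ_of_le hk⟩
  rcases le_or_gt k.val M with hk | hk
  · exact eq_of_val_le hk
  · have hneg : (-k).val ≤ M := by
      rw [ZMod.neg_val', Nat.mod_eq_of_lt (Nat.sub_lt (NeZero.pos N) (by lia))]
      lia
    rw [← hf k, ← hg k, eq_of_val_le hneg]

/-- For N even positive: a_x = a_y iff b_{F^r x} = b_{F^r y}. -/
theorem autocorr_iff_bmap (N Nh : ℕ) [NeZero N] (hN : N = 2 * Nh) (hNh : 0 < Nh) :
    ∀ x y : ZMod N → ℝ,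
      autocorr x = autocorr y ↔ bMap Nh (realDFT Nh x) = bMap Nh (realDFT Nh y) := by
  intro x y
  rw [autocorr_eq_iff_powerSpectrum_eq, funext_iff (f := bMap _ _)]
  simp only [bMap_realDFT hN]
  exact eq_iff_forall_fin_of_even (powerSpectrum_even x) (powerSpectrum_even y) (by lia)
end
end

section
/- Let N be even, let U = (α_0,…,α_{N−1}) be an N-element frame on ℝ^M, and define B_U : ℝ^M → ℝ^{N/2+1} by B_U(x) = ((α_0ᵀx)², (α_1ᵀx)² + (α_{N−1}ᵀx)², …, (α_{N/2−1}ᵀx)² + (α_{N/2+1}ᵀx)², (α_{N/2}ᵀx)²). Then the condition 'for all x, y ∈ ℝ^M, B_U(x) = B_U(y) implies y = x or y = −x' fails if and only if there exists a nonzero real symmetric M×M matrix A with rank(A) ≤ 2 such that α_0ᵀ A α_0 = 0, α_{N/2}ᵀ A α_{N/2} = 0, and α_kᵀ A α_k + α_{N−k}ᵀ A α_{N−k} = 0 for all k = 1,…,N/2 − 1. -/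
/-!
STATEMENT 14: For N even and a frame U = (α_0,…,α_{N−1}) on ℝ^M, the sign-recovery
property for B_U fails iff there exists a nonzero real symmetric M×M matrix A of rank
at most 2 with α_0ᵀAα_0 = 0, α_{N/2}ᵀAα_{N/2} = 0, and
α_kᵀAα_k + α_{N−k}ᵀAα_{N−k} = 0 for k = 1,…,N/2−1.
-/

open Matrix

noncomputable section

/-- The map B_U : ℝ^M → ℝ^{N/2+1} (N = 2·Nh, frame indexed by ZMod N):
B_U(x)[0] = (α_0ᵀx)², B_U(x)[N/2] = (α_{N/2}ᵀx)², and
B_U(x)[k] = (α_kᵀx)² + (α_{N−k}ᵀx)² for 1 ≤ k ≤ N/2−1. -/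
def BMap {M N : ℕ} [NeZero N] (Nh : ℕ) (U : ZMod N → (Fin M → ℝ)) (x : Fin M → ℝ) :
    Fin (Nh + 1) → ℝ :=
  fun j =>
    if (j : ℕ) = 0 then (U 0 ⬝ᵥ x) ^ 2
    else if (j : ℕ) = Nh then (U (Nh : ZMod N) ⬝ᵥ x) ^ 2
    else (U ((j : ℕ) : ZMod N) ⬝ᵥ x) ^ 2 + (U (-((j : ℕ) : ZMod N)) ⬝ᵥ x) ^ 2

/-!
The coordinates of `B_U(x)` are `xᴴ P j x` for positive semidefinite matrices `P j`. For such
measurements, `x` and `y` are indistinguishable if and only if `x xᴴ - y yᴴ`, a Hermitian matrix of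
rank at most `2` which vanishes only when `x` and `y` agree up to phase, is trace-orthogonal to
every `P j`. Conversely, a Hermitian matrix `A` of rank at most `2` that is neither positive nor
negative semidefinite has the form `x xᴴ - y yᴴ`. If `A` is semidefinite, then `trace (P j * A) = 0`
forces `P j * A = 0`, so a nonzero column of `A` has the same measurements as `0`.
-/

open scoped ComplexOrder

section VecMulVec

theorem rank_vecMulVec_sub_vecMulVec_le {R m n : Type*} [CommRing R] [Nontrivial R] [Fintype n]
    (w w' : m → R) (v v' : n → R) : (vecMulVec w v - vecMulVec w' v').rank ≤ 2 := by
  have hfactor : vecMulVec w v - vecMulVec w' v' = (of ![w, w'])ᵀ * of ![v, -v'] := by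
    ext i j
    simp [vecMulVec_apply, mul_apply, sub_eq_add_neg]
  rw [hfactor]
  exact (rank_mul_le_left _ _).trans ((rank_le_card_width _).trans_eq (Fintype.card_fin 2))

theorem trace_mul_vecMulVec {R n : Type*} [CommSemiring R] [Fintype n]
    (P : Matrix n n R) (u v : n → R) : (P * vecMulVec u v).trace = v ⬝ᵥ P *ᵥ u := by
  rw [mul_vecMulVec, trace_vecMulVec, dotProduct_comm]

theorem trace_vecMulVec_mul {R n : Type*} [CommSemiring R] [Fintype n]
    (u v : n → R) (A : Matrix n n R) : (vecMulVec u v * A).trace = v ⬝ᵥ A *ᵥ u := by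
  rw [trace_mul_comm, trace_mul_vecMulVec]

theorem vecMulVec_star_eq_vecMulVec_star_iff {𝕜 n : Type*} [RCLike 𝕜] {x y : n → 𝕜} :
    vecMulVec x (star x) = vecMulVec y (star y) ↔ ∃ c : 𝕜, ‖c‖ = 1 ∧ y = c • x := by
  constructor
  · intro h
    have hentry (i j : n) : x i * star (x j) = y i * star (y j) := congrFun₂ h i j
    have hnorm (i : n) : ‖x i‖ = ‖y i‖ := by
      simpa [← sq] using congrArg norm (hentry i i)
    by_cases hx : x = 0
    · exact ⟨1, norm_one, funext fun i ↦ by simpa [hx, eq_comm] using hnorm i⟩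
    · obtain ⟨i, hi⟩ := Function.ne_iff.1 hx
      have hxi : ‖x i‖ ≠ 0 := norm_ne_zero_iff.2 hi
      have hyi : star (y i) ≠ 0 := star_ne_zero.2 (norm_ne_zero_iff.1 (hnorm i ▸ hxi))
      refine ⟨star (x i) / star (y i), ?_, funext fun j ↦ ?_⟩
      · rw [norm_div, norm_star, norm_star, ← hnorm, div_self hxi]
      · rw [Pi.smul_apply, smul_eq_mul, div_mul_eq_mul_div, eq_div_iff hyi, ← hentry, mul_comm]
  · rintro ⟨c, hc, rfl⟩
    have hcc : c * star c = 1 := by simpa [hc] using RCLike.mul_conj c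
    rw [star_smul, smul_vecMulVec, vecMulVec_smul, smul_smul, hcc, one_smul]

end VecMulVec

section Hermitian

variable {𝕜 n : Type*} [RCLike 𝕜] [Fintype n] {A P : Matrix n n 𝕜}

open scoped MatrixOrder in
theorem mul_eq_zero_of_trace_mul_eq_zero (hP : P.PosSemidef) (hA : A.PosSemidef)
    (h : (P * A).trace = 0) : P * A = 0 := by
  classical
  obtain ⟨B, rfl⟩ := CStarAlgebra.nonneg_iff_eq_star_mul_self.mp hP.nonneg
  obtain ⟨C, rfl⟩ := CStarAlgebra.nonneg_iff_eq_star_mul_self.mp hA.nonneg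
  simp only [star_eq_conjTranspose] at h ⊢
  have hBC : B * Cᴴ = 0 := by
    rw [← trace_conjTranspose_mul_self_eq_zero_iff, conjTranspose_mul, conjTranspose_conjTranspose,
      mul_assoc, trace_mul_comm, ← h]
    simp only [mul_assoc]
  rw [mul_assoc, ← mul_assoc B, hBC, zero_mul, mul_zero]

theorem eq_sum_eigenvalues_smul_vecMulVec [DecidableEq n] (hA : A.IsHermitian) :
    A = ∑ i, hA.eigenvalues i •
      vecMulVec (hA.eigenvectorBasis i).ofLp (star (hA.eigenvectorBasis i).ofLp) := by
  conv_lhs => rw [hA.spectral_theorem, Unitary.conjStarAlgAut_apply]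
  ext k l
  simp only [mul_apply (N := star _), mul_diagonal, Matrix.sum_apply, Matrix.smul_apply,
    vecMulVec_apply, Function.comp_apply, star_apply, IsHermitian.eigenvectorUnitary_apply,
    Pi.star_apply, RCLike.real_smul_eq_coe_mul]
  exact Finset.sum_congr rfl fun i _ ↦ by ring

theorem exists_eigenvalue_neg [DecidableEq n] (hA : A.IsHermitian) (h : ¬ A.PosSemidef) :
    ∃ i, hA.eigenvalues i < 0 := by
  simpa [hA.posSemidef_iff_eigenvalues_nonneg, Pi.le_def] using h

theorem exists_eigenvalue_pos [DecidableEq n] (hA : A.IsHermitian) (h : ¬ (-A).PosSemidef) :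
    ∃ i, 0 < hA.eigenvalues i := by
  by_contra! hnonpos
  apply h
  rw [eq_sum_eigenvalues_smul_vecMulVec hA, ← Finset.sum_neg_distrib]
  refine posSemidef_sum _ fun i _ ↦ ?_
  rw [← neg_smul]
  exact (posSemidef_vecMulVec_self_star _).smul (neg_nonneg.2 (hnonpos i))

theorem exists_eq_vecMulVec_sub_vecMulVec_of_rank_le_two (hA : A.IsHermitian) (hrank : A.rank ≤ 2)
    (hpos : ¬ A.PosSemidef) (hneg : ¬ (-A).PosSemidef) :
    ∃ x y : n → 𝕜, A = vecMulVec x (star x) - vecMulVec y (star y) := by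
  classical
  obtain ⟨i, hi⟩ := exists_eigenvalue_pos hA hneg
  obtain ⟨j, hj⟩ := exists_eigenvalue_neg hA hpos
  have hij : i ≠ j := by
    rintro rfl
    exact hi.not_gt hj
  have hsupport : {i, j} = Finset.univ.filter (hA.eigenvalues · ≠ 0) := by
    refine Finset.eq_of_subset_of_card_le ?_ ?_
    · simp [Finset.insert_subset_iff, hi.ne', hj.ne]
    · rwa [Finset.card_pair hij, ← Fintype.card_subtype, ← hA.rank_eq_card_non_zero_eigs]
  set v : n → n → 𝕜 := fun k ↦ (hA.eigenvectorBasis k).ofLp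
  have hsum : A = hA.eigenvalues i • vecMulVec (v i) (star (v i)) +
      hA.eigenvalues j • vecMulVec (v j) (star (v j)) := by
    rw [← Finset.sum_pair (f := fun k ↦ hA.eigenvalues k • vecMulVec (v k) (star (v k))) hij,
      hsupport, Finset.sum_filter_of_ne fun k _ hk ↦ left_ne_zero_of_smul hk]
    exact eq_sum_eigenvalues_smul_vecMulVec hA
  have hsqrt {r : ℝ} (hr : 0 ≤ r) (u : n → 𝕜) :
      vecMulVec (√r • u) (star (√r • u)) = r • vecMulVec u (star u) := by
    rw [star_smul, smul_vecMulVec, vecMulVec_smul, smul_smul, star_trivial, Real.mul_self_sqrt hr]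
  refine ⟨√(hA.eigenvalues i) • v i, √(-hA.eigenvalues j) • v j, ?_⟩
  rw [hsqrt hi.le, hsqrt (neg_nonneg.2 hj.le), neg_smul, sub_neg_eq_add]
  exact hsum

end Hermitian

section PhaseRetrieval

variable {𝕜 n ι : Type*} [RCLike 𝕜] [Fintype n] {A : Matrix n n 𝕜} {P : ι → Matrix n n 𝕜}

/-- A family of matrices `P j` does phase retrieval if the quadratic measurements `xᴴ P j x`
determine `x` up to a scalar of modulus one, that is, up to sign when `𝕜 = ℝ`. -/
def PhaseRetrieval (P : ι → Matrix n n 𝕜) : Prop :=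
  ∀ x y : n → 𝕜, (∀ j, star x ⬝ᵥ P j *ᵥ x = star y ⬝ᵥ P j *ᵥ y) → ∃ c : 𝕜, ‖c‖ = 1 ∧ y = c • x

theorem trace_mul_vecMulVec_sub_vecMulVec_eq_zero_iff (Q : Matrix n n 𝕜) (x y : n → 𝕜) :
    (Q * (vecMulVec x (star x) - vecMulVec y (star y))).trace = 0 ↔
      star x ⬝ᵥ Q *ᵥ x = star y ⬝ᵥ Q *ᵥ y := by
  rw [mul_sub, trace_sub, trace_mul_vecMulVec, trace_mul_vecMulVec, sub_eq_zero]

theorem not_phaseRetrieval_iff_exists_vecMulVec_sub_vecMulVec :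
    ¬ PhaseRetrieval P ↔ ∃ x y : n → 𝕜, vecMulVec x (star x) - vecMulVec y (star y) ≠ 0 ∧
      ∀ j, (P j * (vecMulVec x (star x) - vecMulVec y (star y))).trace = 0 := by
  simp only [PhaseRetrieval, not_forall, trace_mul_vecMulVec_sub_vecMulVec_eq_zero_iff, ne_eq,
    sub_eq_zero, vecMulVec_star_eq_vecMulVec_star_iff, exists_prop, and_comm]

theorem not_phaseRetrieval_of_mulVec_eq_zero {x : n → 𝕜} (hx0 : x ≠ 0)
    (hx : ∀ j, P j *ᵥ x = 0) : ¬ PhaseRetrieval P := by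
  intro hP
  obtain ⟨c, -, hc⟩ := hP 0 x fun j ↦ by rw [hx, dotProduct_zero, star_zero, zero_dotProduct]
  exact hx0 (hc.trans (smul_zero c))

theorem not_phaseRetrieval_of_posSemidef (hP : ∀ j, (P j).PosSemidef) (hA : A.PosSemidef)
    (hA0 : A ≠ 0) (htrace : ∀ j, (P j * A).trace = 0) : ¬ PhaseRetrieval P := by
  obtain ⟨k, hk⟩ : ∃ k, A.col k ≠ 0 := by
    by_contra! hcol
    exact hA0 (ext_col hcol)
  refine not_phaseRetrieval_of_mulVec_eq_zero hk fun j ↦ funext fun i ↦ ?_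
  exact congrFun₂ (mul_eq_zero_of_trace_mul_eq_zero (hP j) hA (htrace j)) i k

theorem real_lemma9_general (hP : ∀ j, (P j).PosSemidef) :
    ¬ PhaseRetrieval P ↔
      ∃ A : Matrix n n 𝕜, A ≠ 0 ∧ A.IsHermitian ∧ A.rank ≤ 2 ∧ ∀ j, (P j * A).trace = 0 := by
  constructor
  · rw [not_phaseRetrieval_iff_exists_vecMulVec_sub_vecMulVec]
    rintro ⟨x, y, hxy, htrace⟩
    exact ⟨_, hxy, (posSemidef_vecMulVec_self_star x).isHermitian.sub
      (posSemidef_vecMulVec_self_star y).isHermitian, rank_vecMulVec_sub_vecMulVec_le .., htrace⟩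
  · rintro ⟨A, hA0, hA, hrank, htrace⟩
    by_cases hpos : A.PosSemidef
    · exact not_phaseRetrieval_of_posSemidef hP hpos hA0 htrace
    by_cases hneg : (-A).PosSemidef
    · exact not_phaseRetrieval_of_posSemidef hP hneg (neg_ne_zero.2 hA0) (by simpa using htrace)
    obtain ⟨x, y, rfl⟩ :=
      exists_eq_vecMulVec_sub_vecMulVec_of_rank_le_two hA hrank hpos hneg
    exact not_phaseRetrieval_iff_exists_vecMulVec_sub_vecMulVec.2 ⟨x, y, hA0, htrace⟩

end PhaseRetrieval

section FoldedFrame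

variable {M N : ℕ} (Nh : ℕ) (U : ZMod N → (Fin M → ℝ))

/-- The measurement matrices of `BMap`: `xᵀ (foldedGram Nh U j) x` is the `j`-th coordinate of
`BMap Nh U x`. The frame vectors with indices `j` and `-j` are folded together. -/
def foldedGram (j : Fin (Nh + 1)) : Matrix (Fin M) (Fin M) ℝ :=
  if (j : ℕ) = 0 then vecMulVec (U 0) (U 0)
  else if (j : ℕ) = Nh then vecMulVec (U Nh) (U Nh)
  else vecMulVec (U (j : ℕ)) (U (j : ℕ)) + vecMulVec (U (-(j : ℕ))) (U (-(j : ℕ)))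

theorem foldedGram_posSemidef (j : Fin (Nh + 1)) : (foldedGram Nh U j).PosSemidef := by
  have hU (a : ZMod N) : (vecMulVec (U a) (U a)).PosSemidef := posSemidef_vecMulVec_self_star (U a)
  unfold foldedGram
  split_ifs
  exacts [hU _, hU _, (hU _).add (hU _)]

theorem dotProduct_foldedGram_mulVec [NeZero N] (x : Fin M → ℝ) (j : Fin (Nh + 1)) :
    x ⬝ᵥ foldedGram Nh U j *ᵥ x = BMap Nh U x j := by
  have hsq (u : Fin M → ℝ) : x ⬝ᵥ vecMulVec u u *ᵥ x = (u ⬝ᵥ x) ^ 2 := by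
    simp [vecMulVec_mulVec, dotProduct_comm x, sq]
  unfold foldedGram BMap
  split_ifs <;> simp only [add_mulVec, dotProduct_add, hsq]

theorem phaseRetrieval_foldedGram_iff [NeZero N] :
    PhaseRetrieval (foldedGram Nh U) ↔
      ∀ x y : Fin M → ℝ, BMap Nh U x = BMap Nh U y → (y = x ∨ y = -x) := by
  have hsign (x y : Fin M → ℝ) : (∃ c : ℝ, ‖c‖ = 1 ∧ y = c • x) ↔ y = x ∨ y = -x := by
    simp [abs_eq, or_and_right, exists_or]
  simp only [PhaseRetrieval, star_trivial, dotProduct_foldedGram_mulVec, hsign,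
    ← funext_iff]

variable {Nh} in
theorem forall_trace_foldedGram_mul_eq_zero_iff (hNh : 0 < Nh) (A : Matrix (Fin M) (Fin M) ℝ) :
    (∀ j, (foldedGram Nh U j * A).trace = 0) ↔
      U 0 ⬝ᵥ (A *ᵥ U 0) = 0 ∧
      U (Nh : ZMod N) ⬝ᵥ (A *ᵥ U (Nh : ZMod N)) = 0 ∧
      ∀ k : ℕ, 0 < k → k < Nh →
        U (k : ZMod N) ⬝ᵥ (A *ᵥ U (k : ZMod N)) +
          U (-(k : ZMod N)) ⬝ᵥ (A *ᵥ U (-(k : ZMod N))) = 0 := by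
  constructor
  · intro h
    refine ⟨?_, ?_, fun k hk hkN ↦ ?_⟩
    · simpa [foldedGram, trace_vecMulVec_mul] using h 0
    · simpa [foldedGram, trace_vecMulVec_mul, hNh.ne'] using h (Fin.last Nh)
    · simpa [foldedGram, add_mul, trace_vecMulVec_mul, hk.ne', hkN.ne] using h ⟨k, by lia⟩
  · rintro ⟨hzero, hmid, hpairs⟩ j
    unfold foldedGram
    split_ifs with hj0 hjN
    · rwa [trace_vecMulVec_mul]
    · rwa [trace_vecMulVec_mul]
    · rw [add_mul, trace_add, trace_vecMulVec_mul, trace_vecMulVec_mul]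
      exact hpairs j (by lia) (by lia)

end FoldedFrame

/-- Sign recovery from B_U fails iff a nonzero symmetric matrix of rank ≤ 2 satisfies
the system (†). -/
theorem real_lemma9 (M N Nh : ℕ) [NeZero N] (hN : N = 2 * Nh) (hNh : 0 < Nh)
    (U : ZMod N → (Fin M → ℝ))
    (hU : Submodule.span ℝ (Set.range U) = ⊤) :
    (¬ ∀ x y : Fin M → ℝ, BMap Nh U x = BMap Nh U y → (y = x ∨ y = -x)) ↔
      ∃ A : Matrix (Fin M) (Fin M) ℝ, A ≠ 0 ∧ A.IsSymm ∧ A.rank ≤ 2 ∧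
        U 0 ⬝ᵥ (A *ᵥ U 0) = 0 ∧
        U (Nh : ZMod N) ⬝ᵥ (A *ᵥ U (Nh : ZMod N)) = 0 ∧
        ∀ k : ℕ, 0 < k → k < Nh →
          U ((k : ZMod N)) ⬝ᵥ (A *ᵥ U ((k : ZMod N))) +
            U (-(k : ZMod N)) ⬝ᵥ (A *ᵥ U (-(k : ZMod N))) = 0 := by
  rw [← phaseRetrieval_foldedGram_iff, real_lemma9_general (foldedGram_posSemidef Nh U)]
  simp only [isHermitian_iff_isSymm, forall_trace_foldedGram_mul_eq_zero_iff U hNh]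
end
end
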